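/- arXiv:1907.04430 — 2 statements merged into one kernel-verified Lean document; each statement's English description precedes it below -/
import Mathlib

section
/- Let F be the free group on the basis S = {e₀, e₁, e₂, e₃} and let Φ be the automorphism of F with Φ(e₀) = e₀, Φ(e₁) = e₁e₀, Φ(e₂) = e₂e₀, Φ(e₃) = e₃e₀e₁e₂⁻¹. Then for every n ≥ 1 the word lengths of the images of the generators are ‖Φⁿ(e₀)‖ = 1, ‖Φⁿ(e₁)‖ = ‖Φⁿ(e₂)‖ = n+1, and ‖Φⁿ(e₃)‖ = 3n+1; consequently the growth function satisfies GR_{Φ,S}(n) = 3n+1 for all n ≥ 1, so Φ has linear growth. -/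
/-!
The element `u = e₀e₁e₂⁻¹` is fixed by `Φ`, since the two copies of `e₀` produced by `e₁` and `e₂`
cancel. As `Φ(e₃) = e₃u`, induction gives `Φⁿ(e₃) = e₃uⁿ`, and likewise `Φⁿ(eᵢ) = eᵢe₀ⁿ` for
`i = 1, 2`. No cancellation occurs in these products (`wordLength_of_mul_pow` and
`wordLength_of_mul_block_pow`), so the word lengths are `3n + 1` and `n + 1`.
-/

/-- The word length of an element of a free group with respect to the free
basis: the length of the reduced word representing it. -/
noncomputable def wordLength {S : Type*} [DecidableEq S] (w : FreeGroup S) : ℕ :=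
  w.toWord.length

/-- The word `e₀e₁e₂⁻¹` repeated `n` times. -/
def blockWord : ℕ → List (Fin 4 × Bool)
  | 0 => []
  | n + 1 => (0, true) :: (1, true) :: (2, false) :: blockWord n

lemma length_blockWord (n : ℕ) : (blockWord n).length = 3 * n := by
  induction n with
  | zero => rfl
  | succ n ih => simp [blockWord, ih]; ring

lemma mk_blockWord (n : ℕ) : FreeGroup.mk (blockWord n) =
    (FreeGroup.of 0 * FreeGroup.of 1 * (FreeGroup.of 2)⁻¹) ^ n := by
  induction n with
  | zero => rfl
  | succ n ih => rw [pow_succ', ← ih]; rfl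

/-- Only the letter `e₀⁻¹` could cancel against the start of `blockWord n`. -/
lemma isReduced_cons_blockWord (n : ℕ) (a : Fin 4 × Bool) (ha : a.1 = 0 → a.2 = true) :
    FreeGroup.IsReduced (a :: blockWord n) := by
  induction n generalizing a with
  | zero => exact FreeGroup.IsReduced.singleton
  | succ n ih =>
    have h := ih (2, false) (by simp)
    simp only [blockWord, FreeGroup.IsReduced, List.isChain_cons_cons] at h ⊢
    exact ⟨ha, by simp, by simp, h⟩

lemma wordLength_of_mul_block_pow (n : ℕ) :
    wordLength (FreeGroup.of (3 : Fin 4) *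
      (FreeGroup.of 0 * FreeGroup.of 1 * (FreeGroup.of 2)⁻¹) ^ n) = 3 * n + 1 := by
  have h : FreeGroup.of (3 : Fin 4) * (FreeGroup.of 0 * FreeGroup.of 1 * (FreeGroup.of 2)⁻¹) ^ n
      = FreeGroup.mk ((3, true) :: blockWord n) := by
    rw [← mk_blockWord]; rfl
  rw [h, wordLength, FreeGroup.toWord_mk,
    (isReduced_cons_blockWord n (3, true) (by simp)).reduce_eq, List.length_cons,
    length_blockWord]

lemma wordLength_of_mul_pow {S : Type*} [DecidableEq S] (i j : S) (n : ℕ) :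
    wordLength (FreeGroup.of i * FreeGroup.of j ^ n) = n + 1 := by
  have hred : FreeGroup.IsReduced ((i, true) :: List.replicate n (j, true)) := by
    induction n generalizing i with
    | zero => exact FreeGroup.IsReduced.singleton
    | succ n ih =>
      have h := ih j
      simp only [FreeGroup.IsReduced, List.replicate_succ, List.isChain_cons_cons] at h ⊢
      exact ⟨fun _ => trivial, h⟩
  rw [wordLength, FreeGroup.toWord_mul, FreeGroup.toWord_of, FreeGroup.toWord_of_pow,
    List.singleton_append, hred.reduce_eq, List.length_cons, List.length_replicate]

/-- Let `Φ` be the automorphism of the free group on `S = {e₀, e₁, e₂, e₃}`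
with `Φ(e₀) = e₀`, `Φ(e₁) = e₁e₀`, `Φ(e₂) = e₂e₀`, `Φ(e₃) = e₃e₀e₁e₂⁻¹`.  For
`n ≥ 1`, `‖Φⁿ(e₀)‖ = 1`, `‖Φⁿ(e₁)‖ = ‖Φⁿ(e₂)‖ = n+1`, `‖Φⁿ(e₃)‖ = 3n+1`;
consequently `GR_{Φ,S}(n) = max_{s ∈ S} ‖Φⁿ(s)‖ = 3n+1`, so `Φ` has linear
growth. -/
theorem phi_linear_growth (Φ : MulAut (FreeGroup (Fin 4)))
    (e : Fin 4 → FreeGroup (Fin 4)) (he : e = fun i => FreeGroup.of i)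
    (h0 : Φ (e 0) = e 0) (h1 : Φ (e 1) = e 1 * e 0) (h2 : Φ (e 2) = e 2 * e 0)
    (h3 : Φ (e 3) = e 3 * e 0 * e 1 * (e 2)⁻¹) :
    ∀ n : ℕ, 1 ≤ n →
      wordLength ((Φ ^ n) (e 0)) = 1 ∧
      wordLength ((Φ ^ n) (e 1)) = n + 1 ∧
      wordLength ((Φ ^ n) (e 2)) = n + 1 ∧
      wordLength ((Φ ^ n) (e 3)) = 3 * n + 1 ∧
      (Finset.univ.sup fun i : Fin 4 => wordLength ((Φ ^ n) (FreeGroup.of i)))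
        = 3 * n + 1 := by
  subst he
  simp only at h0 h1 h2 h3 ⊢
  intro n hn
  have p0 : ∀ n : ℕ, (Φ ^ n) (FreeGroup.of 0) = FreeGroup.of 0 := by
    intro n
    induction n with
    | zero => rfl
    | succ n ih => rw [pow_succ', MulAut.mul_apply, ih, h0]
  have p1 : (Φ ^ n) (FreeGroup.of 1) = FreeGroup.of 1 * FreeGroup.of 0 ^ n := by
    clear hn
    induction n with
    | zero => simp
    | succ n ih => rw [pow_succ', MulAut.mul_apply, ih, map_mul, map_pow, h0, h1, pow_succ',
        mul_assoc]
  have p2 : (Φ ^ n) (FreeGroup.of 2) = FreeGroup.of 2 * FreeGroup.of 0 ^ n := by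
    clear hn p1
    induction n with
    | zero => simp
    | succ n ih => rw [pow_succ', MulAut.mul_apply, ih, map_mul, map_pow, h0, h2, pow_succ',
        mul_assoc]
  have hu : Φ (FreeGroup.of 0 * FreeGroup.of 1 * (FreeGroup.of 2)⁻¹) =
      FreeGroup.of 0 * FreeGroup.of 1 * (FreeGroup.of 2)⁻¹ := by
    rw [map_mul, map_mul, map_inv, h0, h1, h2]
    group
  have p3 : (Φ ^ n) (FreeGroup.of 3) = FreeGroup.of 3 *
      (FreeGroup.of 0 * FreeGroup.of 1 * (FreeGroup.of 2)⁻¹) ^ n := by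
    clear hn p1 p2
    induction n with
    | zero => simp
    | succ n ih =>
      rw [pow_succ', MulAut.mul_apply, ih, map_mul, map_pow, hu, h3, pow_succ']
      simp only [mul_assoc]
  have l0 : wordLength ((Φ ^ n) (FreeGroup.of 0)) = 1 := by
    rw [p0, wordLength, FreeGroup.toWord_of, List.length_singleton]
  have l1 : wordLength ((Φ ^ n) (FreeGroup.of 1)) = n + 1 := by
    rw [p1, wordLength_of_mul_pow]
  have l2 : wordLength ((Φ ^ n) (FreeGroup.of 2)) = n + 1 := by
    rw [p2, wordLength_of_mul_pow]
  have l3 : wordLength ((Φ ^ n) (FreeGroup.of 3)) = 3 * n + 1 := by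
    rw [p3, wordLength_of_mul_block_pow]
  refine ⟨l0, l1, l2, l3, le_antisymm (Finset.sup_le fun i _ => ?_) ?_⟩
  · fin_cases i
    · exact l0.trans_le (by omega)
    · exact l1.trans_le (by omega)
    · exact l2.trans_le (by omega)
    · exact l3.le
  · exact l3.ge.trans (Finset.le_sup (f := fun i : Fin 4 => wordLength ((Φ ^ n) (FreeGroup.of i)))
      (Finset.mem_univ 3))
end

section
/- Let F be the free group on e₀, e₁, e₂, e₃, let Φ be the automorphism of F with Φ(e₀) = e₀, Φ(e₁) = e₁e₀, Φ(e₂) = e₂e₀, Φ(e₃) = e₃e₀e₁e₂⁻¹, and let G = F ⋊_Φ ℤ with stable letter t = (1, 1). Then the subgroup of G generated by t and (e₀, 0), and the subgroup of G generated by t and (e₀e₁e₂⁻¹, 0), are each free abelian of rank 2. -/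
/-!
Both `e₀` and `w = e₀e₁e₂⁻¹` are fixed by `Φ` (for `w`, the factors `e₀` and `e₀⁻¹` coming from
`e₁` and `e₂⁻¹` cancel), so each commutes with `t`. Hence `(a, b) ↦ (gᵇ, a)` is a homomorphism from `ℤ × ℤ`
onto the subgroup generated by `t` and the fixed element `g`. It is injective: the `ℤ`-component
recovers `a`, and the exponent sum of `e₀`, which is `1` on both `e₀` and `w`, recovers `b`.
-/

/-- The mapping torus `F ⋊_Φ ℤ` of an automorphism `Φ` of `F`: the semidirect
product of `F` by `ℤ` where `ℤ` acts by `n ↦ Φⁿ`. -/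
abbrev MappingTorus (F : Type*) [Group F] (Φ : MulAut F) :=
  F ⋊[zpowersHom (MulAut F) Φ] Multiplicative ℤ

/-- The stable letter and a fixed element `g` of the automorphism generate a copy of `ℤ × ℤ`; the
character `χ` with `χ g = 1` serves to show that `g` has infinite order. -/
theorem nonempty_closure_mulEquiv_of_fixed {F : Type*} [Group F] (Φ : MulAut F) (g : F)
    (hg : Φ g = g) (χ : F →* Multiplicative ℤ) (hχ : χ g = Multiplicative.ofAdd 1) :
    Nonempty ((Subgroup.closure
        {(⟨1, Multiplicative.ofAdd 1⟩ : MappingTorus F Φ), ⟨g, 1⟩}) ≃*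
      Multiplicative (ℤ × ℤ)) := by
  have hfix : ∀ n : ℤ, (Φ ^ n) g = g := fun n =>
    (MulAction.stabilizer (MulAut F) g).zpow_mem (show Φ ∈ _ from hg) n
  let f : Multiplicative (ℤ × ℤ) →* MappingTorus F Φ := MonoidHom.mk'
    (fun p => ⟨g ^ p.toAdd.2, Multiplicative.ofAdd p.toAdd.1⟩) (by
      intro p q
      ext
      · change g ^ (p.toAdd.2 + q.toAdd.2) =
          g ^ p.toAdd.2 * (Φ ^ p.toAdd.1) (g ^ q.toAdd.2)
        rw [map_zpow, hfix, zpow_add]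
      · rfl)
  have hf : ∀ p, f p = ⟨g ^ p.toAdd.2, Multiplicative.ofAdd p.toAdd.1⟩ := fun _ => rfl
  have hinj : Function.Injective f := by
    intro p q hpq
    rw [hf, hf, SemidirectProduct.ext_iff] at hpq
    obtain ⟨hl, hr⟩ := hpq
    have hl' := congrArg (fun x => (χ x).toAdd) hl
    simp only [map_zpow, hχ, toAdd_zpow, toAdd_ofAdd, smul_eq_mul, mul_one] at hl'
    exact Multiplicative.toAdd.injective (Prod.ext (Multiplicative.ofAdd.injective hr) hl')
  have ht : f (Multiplicative.ofAdd (1, 0)) = ⟨1, Multiplicative.ofAdd 1⟩ := by simp [hf]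
  have hg' : f (Multiplicative.ofAdd (0, 1)) = ⟨g, 1⟩ := by simp [hf]
  have hrange : f.range = Subgroup.closure
      {(⟨1, Multiplicative.ofAdd 1⟩ : MappingTorus F Φ), ⟨g, 1⟩} := by
    apply le_antisymm
    · rintro _ ⟨p, rfl⟩
      have hp : p = Multiplicative.ofAdd ((1, 0) : ℤ × ℤ) ^ p.toAdd.1 *
          Multiplicative.ofAdd ((0, 1) : ℤ × ℤ) ^ p.toAdd.2 := by
        apply Multiplicative.toAdd.injective
        ext <;> simp
      rw [hp, map_mul, map_zpow, map_zpow, ht, hg']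
      exact mul_mem (zpow_mem (Subgroup.subset_closure (by simp)) _)
        (zpow_mem (Subgroup.subset_closure (by simp)) _)
    · rw [Subgroup.closure_le]
      rintro x (rfl | rfl)
      exacts [⟨_, ht⟩, ⟨_, hg'⟩]
  exact ⟨((MonoidHom.ofInjective hinj).trans (MulEquiv.subgroupCongr hrange)).symm⟩

/-- Let `Φ` be the automorphism of the free group `F` on `e₀, e₁, e₂, e₃` with
`Φ(e₀) = e₀`, `Φ(e₁) = e₁e₀`, `Φ(e₂) = e₂e₀`, `Φ(e₃) = e₃e₀e₁e₂⁻¹`, and let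
`G = F ⋊_Φ ℤ` with stable letter `t = (1, 1)`.  Then the subgroup generated by
`t` and `(e₀, 0)`, and the subgroup generated by `t` and `(e₀e₁e₂⁻¹, 0)`, are
each free abelian of rank `2` (i.e. isomorphic to `ℤ × ℤ`). -/
theorem tori_subgroups_free_abelian (Φ : MulAut (FreeGroup (Fin 4)))
    (e : Fin 4 → FreeGroup (Fin 4)) (he : e = fun i => FreeGroup.of i)
    (h0 : Φ (e 0) = e 0) (h1 : Φ (e 1) = e 1 * e 0) (h2 : Φ (e 2) = e 2 * e 0)
    (h3 : Φ (e 3) = e 3 * e 0 * e 1 * (e 2)⁻¹) :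
    Nonempty ((Subgroup.closure
        {(⟨1, Multiplicative.ofAdd 1⟩ : MappingTorus (FreeGroup (Fin 4)) Φ),
          ⟨e 0, 1⟩}) ≃* Multiplicative (ℤ × ℤ)) ∧
    Nonempty ((Subgroup.closure
        {(⟨1, Multiplicative.ofAdd 1⟩ : MappingTorus (FreeGroup (Fin 4)) Φ),
          ⟨e 0 * e 1 * (e 2)⁻¹, 1⟩}) ≃* Multiplicative (ℤ × ℤ)) := by
  subst he
  -- `χ` is the exponent sum of `e₀`.
  let χ : FreeGroup (Fin 4) →* Multiplicative ℤ :=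
    FreeGroup.lift fun i => if i = 0 then Multiplicative.ofAdd 1 else 1
  refine ⟨nonempty_closure_mulEquiv_of_fixed Φ _ h0 χ (by simp [χ]),
    nonempty_closure_mulEquiv_of_fixed Φ _ ?_ χ (by simp [χ])⟩
  rw [map_mul, map_mul, map_inv, h0, h1, h2]
  group
end
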